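/- arXiv:2507.07076 — 8 statements merged into one kernel-verified Lean document; each statement's English description precedes it below -/
import Mathlib

section
/- Let a > 0, b > 1, k ≥ 1 and let D ≥ 2 be an integer. Then there exists a' > 0, depending only on a, b, k and D, such that, with b' = b^{1/k} > 1, the following holds. Let Γ₁ and Γ₂ be connected simple graphs with graph metrics d₁ and d₂. Assume every vertex of Γ₁ has degree at most D, that Γ₂ is locally finite, and that Γ₁ has exponential growth with parameters (a,b), i.e. for every vertex u of Γ₁ and every integer n ≥ 1 the ball B₁(u,n) contains at least a·bⁿ vertices. Let φ: V(Γ₁) → V(Γ₂) be a k-quasiisometric embedding (with respect to d₁ and d₂), and let v be a vertex of Γ₂ with d₂(φ(u), v) ≤ k for some vertex u of Γ₁. Then for every integer m ≥ 1, the ball B₂(v,m) in Γ₂ contains at least a'·(b')^m vertices. -/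
theorem ball_succ_subset {V : Type*} (G : SimpleGraph V) (hG : G.Connected) (u : V) (n : ℕ) :
    {w : V | G.dist u w ≤ n + 1} ⊆
      ⋃ w ∈ {w : V | G.dist u w ≤ n}, insert w (G.neighborSet w) := by
  intro w hw
  simp only [Set.mem_ofPred_eq] at hw
  simp only [Set.mem_iUnion, Set.mem_ofPred_eq, exists_prop]
  obtain ⟨p, hp⟩ := hG.exists_walk_length_eq_dist w u
  rw [SimpleGraph.dist_comm] at hp
  cases p with
  | nil => exact ⟨u, by simp, Set.mem_insert _ _⟩
  | @cons _ x _ h q =>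
    refine ⟨x, ?_, Set.mem_insert_of_mem _ h.symm⟩
    have := SimpleGraph.dist_le q
    rw [SimpleGraph.dist_comm] at this
    simp only [SimpleGraph.Walk.length_cons] at hp
    omega

theorem ball_finite {V : Type*} (G : SimpleGraph V) (hG : G.Connected)
    (hf : ∀ v, (G.neighborSet v).Finite) (u : V) (n : ℕ) :
    {w : V | G.dist u w ≤ n}.Finite := by
  induction n with
  | zero =>
    refine (Set.finite_singleton u).subset ?_
    intro w hw
    simp only [Set.mem_ofPred_eq, Nat.le_zero] at hw
    exact ((hG u w).dist_eq_zero_iff.1 hw).symm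
  | succ n ih =>
    exact (ih.biUnion fun w _ => (hf w).insert w).subset (ball_succ_subset G hG u n)

theorem ball_card {V : Type*} (G : SimpleGraph V) (hG : G.Connected) (D : ℕ)
    (hf : ∀ v, (G.neighborSet v).Finite ∧ (G.neighborSet v).ncard ≤ D) (u : V) (n : ℕ) :
    {w : V | G.dist u w ≤ n}.ncard ≤ (D + 1) ^ n := by
  induction n with
  | zero =>
    have : {w : V | G.dist u w ≤ 0} ⊆ {u} := by
      intro w hw
      simp only [Set.mem_ofPred_eq, Nat.le_zero] at hw
      exact ((hG u w).dist_eq_zero_iff.1 hw).symm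
    simpa using Set.ncard_le_ncard this
  | succ n ih =>
    classical
    have hfin := ball_finite G hG (fun v => (hf v).1) u n
    have h1 : (⋃ w ∈ {w : V | G.dist u w ≤ n}, insert w (G.neighborSet w)) =
        ((hfin.toFinset.biUnion fun w => ((hf w).1.insert w).toFinset : Finset V) : Set V) := by
      ext x; simp
    calc _ ≤ _ := Set.ncard_le_ncard (ball_succ_subset G hG u n)
            (by rw [h1]; exact Finset.finite_toSet _)
      _ ≤ hfin.toFinset.card * (D + 1) := by
          rw [h1, Set.ncard_coe_finset]
          refine Finset.card_biUnion_le_card_mul _ _ _ fun w _ => ?_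
          rw [← Set.ncard_eq_toFinset_card _ ((hf w).1.insert w)]
          exact (Set.ncard_insert_le _ _).trans (Nat.succ_le_succ (hf w).2)
      _ ≤ _ := by
          rw [← Set.ncard_eq_toFinset_card _ hfin, pow_succ]
          exact Nat.mul_le_mul_right _ ih

/-- A `k`-quasiisometric embedding of a bounded-valence graph with exponential
growth parameters `(a,b)` into a locally finite graph forces exponential growth
of balls around any vertex `k`-close to the image, with parameters
`(a', b^(1/k))` where `a'` depends only on `a`, `b`, `k` and `D`. -/
theorem stmt2 (a b k : ℝ) (ha : 0 < a) (hb : 1 < b) (hk : 1 ≤ k)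
    (D : ℕ) (hD : 2 ≤ D) :
    ∃ a' : ℝ, 0 < a' ∧
      ∀ (V₁ V₂ : Type*) (Γ₁ : SimpleGraph V₁) (Γ₂ : SimpleGraph V₂),
        Γ₁.Connected → Γ₂.Connected →
        (∀ v : V₁, (Γ₁.neighborSet v).Finite ∧ (Γ₁.neighborSet v).ncard ≤ D) →
        (∀ v : V₂, (Γ₂.neighborSet v).Finite) →
        (∀ (u : V₁) (n : ℕ), 1 ≤ n →
            a * b ^ n ≤ ({w : V₁ | Γ₁.dist u w ≤ n}.ncard : ℝ)) →
        ∀ φ : V₁ → V₂,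
          (∀ x y : V₁,
              (1 / k) * (Γ₁.dist x y : ℝ) - k ≤ (Γ₂.dist (φ x) (φ y) : ℝ) ∧
              (Γ₂.dist (φ x) (φ y) : ℝ) ≤ k * (Γ₁.dist x y : ℝ) + k) →
          ∀ (v : V₂) (u : V₁), (Γ₂.dist (φ u) v : ℝ) ≤ k →
            ∀ m : ℕ, 1 ≤ m →
              a' * (b ^ ((1 : ℝ) / k)) ^ m ≤ ({w : V₂ | Γ₂.dist v w ≤ m}.ncard : ℝ) := by
  have hk0 : 0 < k := by linarith
  have hb0 : 0 < b := by linarith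
  set N : ℕ := (D + 1) ^ ⌊k * k⌋₊ with hN
  have hNpos : (0 : ℝ) < N := by rw [hN]; positivity
  refine ⟨min (b ^ (-3 : ℝ)) (a * b ^ (-3 : ℝ) / N), by positivity, ?_⟩
  intro V₁ V₂ Γ₁ Γ₂ h1 h2 hD1 hf2 hgr φ hφ v u huv m hm
  have hfin2 := ball_finite Γ₂ h2 hf2 v m
  have hpow : (b ^ ((1 : ℝ) / k)) ^ m = b ^ ((m : ℝ) / k) := by
    rw [← Real.rpow_natCast, ← Real.rpow_mul hb0.le]; congr 1; ring
  rw [hpow]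
  have hbp : 0 < b ^ ((m : ℝ) / k) := by positivity
  by_cases hmk : (m : ℝ) / k < 3
  · have hone : 1 ≤ {w : V₂ | Γ₂.dist v w ≤ m}.ncard :=
      (Set.ncard_pos hfin2).2 ⟨v, by simp⟩
    calc _ ≤ b ^ (-3 : ℝ) * b ^ ((m : ℝ) / k) :=
          mul_le_mul_of_nonneg_right (min_le_left _ _) hbp.le
      _ = b ^ (-3 + (m : ℝ) / k) := (Real.rpow_add hb0 _ _).symm
      _ ≤ 1 := Real.rpow_le_one_of_one_le_of_nonpos hb.le (by linarith)
      _ ≤ _ := by exact_mod_cast hone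
  · push Not at hmk
    have hfl : 3 ≤ ⌊(m : ℝ) / k⌋₊ := Nat.le_floor (by exact_mod_cast hmk)
    obtain ⟨n, hn⟩ : ∃ n, ⌊(m : ℝ) / k⌋₊ = n + 2 := ⟨_, (Nat.sub_add_cancel (by omega)).symm⟩
    have hn1 : 1 ≤ n := by omega
    have hle : ((n : ℝ) + 2) ≤ m / k := by
      have := Nat.floor_le (show 0 ≤ (m : ℝ) / k by positivity)
      rw [hn] at this; push_cast at this; exact this
    have hge : (m : ℝ) / k < n + 3 := by
      have := Nat.lt_floor_add_one ((m : ℝ) / k)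
      rw [hn] at this; push_cast at this; linarith
    rw [le_div_iff₀ hk0] at hle
    classical
    have hfin1 := ball_finite Γ₁ h1 (fun v => (hD1 v).1) u n
    have hmaps : ∀ x ∈ hfin1.toFinset, φ x ∈ hfin2.toFinset := by
      intro x hx
      simp only [Set.Finite.mem_toFinset, Set.mem_ofPred_eq] at hx ⊢
      have t : (Γ₂.dist v (φ x) : ℝ) ≤ Γ₂.dist v (φ u) + Γ₂.dist (φ u) (φ x) := by
        exact_mod_cast h2.dist_triangle
      rw [Γ₂.dist_comm (u := v) (v := φ u)] at t
      have q := (hφ u x).2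
      have hx' : (Γ₁.dist u x : ℝ) ≤ n := by exact_mod_cast hx
      have : k * (Γ₁.dist u x : ℝ) ≤ k * n := mul_le_mul_of_nonneg_left hx' hk0.le
      have : (Γ₂.dist v (φ x) : ℝ) ≤ m := by nlinarith
      exact_mod_cast this
    have hcard : hfin1.toFinset.card ≤ N * hfin2.toFinset.card := by
      refine Finset.card_le_mul_card_image_of_maps_to hmaps N ?_
      intro y hy
      by_cases he : (hfin1.toFinset.filter fun x => φ x = y).Nonempty
      · obtain ⟨x0, hx0⟩ := he
        have hx0 := (Finset.mem_filter.1 hx0).2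
        refine le_trans ?_ (ball_card Γ₁ h1 D hD1 x0 ⌊k * k⌋₊)
        rw [← Set.ncard_coe_finset]
        refine Set.ncard_le_ncard ?_ (ball_finite Γ₁ h1 (fun v => (hD1 v).1) x0 _)
        intro x hx
        have hx := (Finset.mem_filter.1 (Finset.mem_coe.1 hx)).2
        have q := (hφ x0 x).1
        rw [hx0, hx, SimpleGraph.dist_self] at q
        simp only [Set.mem_ofPred_eq]
        apply Nat.le_floor
        have q' : (Γ₁.dist x0 x : ℝ) / k ≤ k := by
          push_cast at q; rw [one_div_mul_eq_div] at q; linarith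
        exact (div_le_iff₀ hk0).1 q'
      · rw [Finset.not_nonempty_iff_eq_empty.1 he]; simp
    rw [← Set.ncard_eq_toFinset_card _ hfin1, ← Set.ncard_eq_toFinset_card _ hfin2] at hcard
    have hcard' : ({w : V₁ | Γ₁.dist u w ≤ n}.ncard : ℝ) ≤
        N * ({w : V₂ | Γ₂.dist v w ≤ m}.ncard : ℝ) := by exact_mod_cast hcard
    have hg := (hgr u n hn1).trans hcard'
    calc _ ≤ (a * b ^ (-3 : ℝ) / N) * b ^ ((m : ℝ) / k) :=
          mul_le_mul_of_nonneg_right (min_le_right _ _) hbp.le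
      _ = a * b ^ (-3 + (m : ℝ) / k) / N := by rw [Real.rpow_add hb0]; ring
      _ ≤ a * b ^ (n : ℝ) / N := by
          gcongr
          · exact hb.le
          · linarith
      _ ≤ _ := by
          rw [Real.rpow_natCast, div_le_iff₀ hNpos]; linarith
end

section
/- Let Γ₁ and Γ₂ be connected simple graphs with graph metrics d₁ and d₂, each of bounded valence (i.e. all vertex degrees bounded by a fixed constant). Let φ: V(Γ₁) → V(Γ₂) be a quasiisometry with respect to d₁ and d₂, i.e. a k-quasiisometric embedding for some k ≥ 1 whose image is k-dense in (V(Γ₂), d₂). Then Γ₁ has exponential growth if and only if Γ₂ has exponential growth. -/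
/-- A graph has exponential growth: for some `a > 0` and `b > 1`, every ball
of radius `n ≥ 1` around every vertex contains at least `a·bⁿ` vertices. -/
def HasExpGrowth {V : Type*} (G : SimpleGraph V) : Prop :=
  ∃ a b : ℝ, 0 < a ∧ 1 < b ∧
    ∀ (u : V) (n : ℕ), 1 ≤ n → a * b ^ n ≤ ({v : V | G.dist u v ≤ n}.ncard : ℝ)

lemma ball_bound {V : Type*} (G : SimpleGraph V) (hG : G.Connected) (D : ℕ)
    (hD : ∀ v : V, (G.neighborSet v).Finite ∧ (G.neighborSet v).ncard ≤ D) (n : ℕ) :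
    ∃ M : ℕ, ∀ u : V, {v : V | G.dist u v ≤ n}.Finite ∧ {v : V | G.dist u v ≤ n}.ncard ≤ M := by
  classical
  induction n with
  | zero =>
    refine ⟨1, fun u => ?_⟩
    have : {v : V | G.dist u v ≤ 0} = {u} := by
      ext v
      simp only [Set.mem_ofPred_eq, Nat.le_zero, Set.mem_singleton_iff]
      rw [hG.dist_eq_zero_iff]
      exact eq_comm
    rw [this]
    simp
  | succ n ih =>
    obtain ⟨M, hM⟩ := ih
    refine ⟨M + M * D, fun u => ?_⟩
    obtain ⟨hf, hc⟩ := hM u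
    have hsub : {v : V | G.dist u v ≤ n + 1} ⊆
        ((hf.toFinset ∪ hf.toFinset.biUnion (fun w => (hD w).1.toFinset) : Finset V) : Set V) := by
      intro v hv
      simp only [Set.mem_ofPred_eq] at hv
      simp only [Finset.coe_union, Finset.coe_biUnion, Set.mem_union, Set.Finite.coe_toFinset,
        Set.mem_ofPred_eq, Set.mem_iUnion, SimpleGraph.mem_neighborSet, exists_prop]
      by_cases h : G.dist u v ≤ n
      · exact Or.inl h
      · right
        obtain ⟨p, hp⟩ := hG.exists_walk_length_eq_dist v u
        cases p with
        | nil => simp at h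
        | cons hadj q =>
          rename_i w
          refine ⟨w, ?_, hadj.symm⟩
          have := SimpleGraph.dist_le q
          rw [SimpleGraph.dist_comm] at this
          rw [SimpleGraph.dist_comm] at hp
          simp at hp
          omega
    refine ⟨(Finset.finite_toSet _).subset hsub, ?_⟩
    refine (Set.ncard_le_ncard hsub (Finset.finite_toSet _)).trans ?_
    rw [Set.ncard_coe_finset]
    rw [Set.ncard_eq_toFinset_card _ hf] at hc
    refine (Finset.card_union_le _ _).trans (add_le_add hc ?_)
    refine (Finset.card_biUnion_le_card_mul _ _ D ?_).trans (Nat.mul_le_mul_right _ hc)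
    intro w _
    rw [← Set.ncard_eq_toFinset_card _ (hD w).1]
    exact (hD w).2

lemma growth_transfer {V W : Type*} (G : SimpleGraph V) (H : SimpleGraph W)
    (hG : G.Connected) (hH : H.Connected)
    (D : ℕ) (hD : ∀ v : V, (G.neighborSet v).Finite ∧ (G.neighborSet v).ncard ≤ D)
    (E : ℕ) (hE : ∀ v : W, (H.neighborSet v).Finite ∧ (H.neighborSet v).ncard ≤ E)
    (f : V → W) (C : ℕ) (hC : 1 ≤ C)
    (hup : ∀ x y, H.dist (f x) (f y) ≤ C * G.dist x y + C)
    (hfib : ∀ x y, f x = f y → G.dist x y ≤ C)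
    (hdense : ∀ v, ∃ u, H.dist (f u) v ≤ C) (hg : HasExpGrowth G) : HasExpGrowth H := by
  classical
  obtain ⟨a, b, ha, hb, hab⟩ := hg
  obtain ⟨M, hM⟩ := ball_bound G hG D hD C
  have hb0 : (0:ℝ) ≤ b := by linarith
  have hM0 : (0:ℝ) < (M:ℝ) + 1 := by positivity
  -- a C-th root of b
  obtain ⟨β, hβ1, hβ⟩ : ∃ β : ℝ, 1 < β ∧ β ^ C = b := by
    refine ⟨b ^ ((C:ℝ)⁻¹), Real.one_lt_rpow hb (by positivity), ?_⟩
    exact Real.rpow_inv_natCast_pow hb0 (by omega)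
  have hβ0 : 0 < β := by linarith
  have hP : 0 < β ^ (3 * C) := by positivity
  refine ⟨min (a / (M + 1)) 1 / β ^ (3 * C), β, by positivity, hβ1, fun v m hm => ?_⟩
  obtain ⟨K, hK⟩ := ball_bound H hH E hE m
  have hfin := (hK v).1
  rw [div_mul_eq_mul_div, div_le_iff₀ hP]
  by_cases hmC : 3 * C ≤ m
  · obtain ⟨u, hu⟩ := hdense v
    obtain ⟨n, hn⟩ : ∃ n, m / C = n + 2 :=
      ⟨m / C - 2, by have : 3 ≤ m / C := (Nat.le_div_iff_mul_le hC).2 hmC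
                     omega⟩
    have h3 : 3 ≤ m / C := (Nat.le_div_iff_mul_le hC).2 hmC
    have hle : C * (n + 2) ≤ m := hn ▸ Nat.mul_div_le m C
    have hge : m ≤ C * (n + 3) := by
      have := Nat.lt_mul_div_succ m hC
      rw [hn] at this
      exact this.le
    obtain ⟨L, hL⟩ := ball_bound G hG D hD n
    have hA := (hL u).1
    have hcard : {x : V | G.dist u x ≤ n}.ncard ≤ M * {w : W | H.dist v w ≤ m}.ncard := by
      rw [Set.ncard_eq_toFinset_card _ hA, Set.ncard_eq_toFinset_card _ hfin]
      refine Finset.card_le_mul_card_image_of_maps_to (f := f) ?_ M ?_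
      · intro x hx
        simp only [Set.Finite.mem_toFinset, Set.mem_ofPred_eq, Set.Finite.coe_toFinset] at hx ⊢
        have t1 := hH.dist_triangle (u := v) (v := f u) (w := f x)
        rw [SimpleGraph.dist_comm (u := v) (v := f u)] at t1
        have t2 := hup u x
        have t3 : C * G.dist u x ≤ C * n := Nat.mul_le_mul_left _ hx
        have : C * (n + 2) = C * n + 2 * C := by ring
        omega
      · intro w _
        rcases Finset.eq_empty_or_nonempty ({x ∈ hA.toFinset | f x = w}) with h | ⟨x, hx⟩
        · rw [h]; simp
        · refine le_trans (Finset.card_le_card (t := (hM x).1.toFinset) ?_) ?_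
          · intro y hy
            simp only [Finset.mem_filter] at hx hy
            simp only [Set.Finite.mem_toFinset, Set.mem_ofPred_eq]
            exact hfib x y (hx.2.trans hy.2.symm)
          · rw [← Set.ncard_eq_toFinset_card _ (hM x).1]; exact (hM x).2
    have hcard' : ({x : V | G.dist u x ≤ n}.ncard : ℝ) ≤ M * ({w : W | H.dist v w ≤ m}.ncard : ℝ) := by
      exact_mod_cast hcard
    have h4 := hab u n (by omega)
    have h5 : a / (M + 1) * b ^ n ≤ ({w : W | H.dist v w ≤ m}.ncard : ℝ) := by
      rw [div_mul_eq_mul_div, div_le_iff₀ hM0]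
      have : (0:ℝ) ≤ ({w : W | H.dist v w ≤ m}.ncard : ℝ) := by positivity
      nlinarith
    calc min (a / (M + 1)) 1 * β ^ m ≤ a / (M + 1) * β ^ (C * (n + 3)) :=
          mul_le_mul (min_le_left _ _) (pow_le_pow_right₀ hβ1.le hge) (by positivity) (by positivity)
      _ = a / (M + 1) * b ^ n * β ^ (3 * C) := by rw [← hβ]; ring
      _ ≤ _ := mul_le_mul_of_nonneg_right h5 hP.le
  · have h1 : (1:ℝ) ≤ ({w : W | H.dist v w ≤ m}.ncard : ℝ) := by
      have : 0 < {w : W | H.dist v w ≤ m}.ncard :=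
        (Set.ncard_pos hfin).2 ⟨v, by simp⟩
      exact_mod_cast this
    exact mul_le_mul (le_trans (min_le_right _ _) h1)
      (pow_le_pow_right₀ hβ1.le (by omega)) (by positivity) (by positivity)

/-- Exponential growth of bounded-valence connected graphs is a
quasiisometry invariant. -/
theorem stmt3 {V₁ V₂ : Type*} (Γ₁ : SimpleGraph V₁) (Γ₂ : SimpleGraph V₂)
    (h₁ : Γ₁.Connected) (h₂ : Γ₂.Connected)
    (D₁ : ℕ) (hD₁ : ∀ v : V₁, (Γ₁.neighborSet v).Finite ∧ (Γ₁.neighborSet v).ncard ≤ D₁)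
    (D₂ : ℕ) (hD₂ : ∀ v : V₂, (Γ₂.neighborSet v).Finite ∧ (Γ₂.neighborSet v).ncard ≤ D₂)
    (φ : V₁ → V₂) (k : ℝ) (hk : 1 ≤ k)
    (hqi : ∀ x y : V₁,
        (1 / k) * (Γ₁.dist x y : ℝ) - k ≤ (Γ₂.dist (φ x) (φ y) : ℝ) ∧
        (Γ₂.dist (φ x) (φ y) : ℝ) ≤ k * (Γ₁.dist x y : ℝ) + k)
    (hdense : ∀ v : V₂, ∃ u : V₁, (Γ₂.dist (φ u) v : ℝ) ≤ k) :
    HasExpGrowth Γ₁ ↔ HasExpGrowth Γ₂ := by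

  have hk0 : 0 < k := by linarith
  -- lower bound in multiplied form
  have hlow : ∀ x y, (Γ₁.dist x y : ℝ) ≤ k * (Γ₂.dist (φ x) (φ y) : ℝ) + k * k := by
    intro x y
    have h := (hqi x y).1
    have h' := mul_le_mul_of_nonneg_left h hk0.le
    have e : k * ((1 / k) * (Γ₁.dist x y : ℝ) - k) = (Γ₁.dist x y : ℝ) - k * k := by
      field_simp
    rw [e] at h'
    linarith
  obtain ⟨C, hC⟩ := exists_nat_ge (3 * (k * k))
  have hkk : k ≤ k * k := by nlinarith
  have hC1 : 1 ≤ C := by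
    have : (1:ℝ) ≤ C := by linarith
    exact_mod_cast this
  constructor
  · refine growth_transfer Γ₁ Γ₂ h₁ h₂ D₁ hD₁ D₂ hD₂ φ C hC1 ?_ ?_ ?_
    · intro x y
      have h := (hqi x y).2
      have hd : (0:ℝ) ≤ Γ₁.dist x y := by positivity
      have : (Γ₂.dist (φ x) (φ y) : ℝ) ≤ C * Γ₁.dist x y + C := by nlinarith
      exact_mod_cast this
    · intro x y hxy
      have h := hlow x y
      rw [hxy, SimpleGraph.dist_self] at h
      have : (Γ₁.dist x y : ℝ) ≤ C := by
        simp at h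
        linarith
      exact_mod_cast this
    · intro v
      obtain ⟨u, hu⟩ := hdense v
      refine ⟨u, ?_⟩
      have : (Γ₂.dist (φ u) v : ℝ) ≤ C := by linarith
      exact_mod_cast this
  · choose ψ hψ using hdense
    have hψ' : ∀ v, (Γ₂.dist v (φ (ψ v)) : ℝ) ≤ k := fun v => by
      rw [SimpleGraph.dist_comm]; exact hψ v
    have tri : ∀ x y z, (Γ₂.dist x z : ℝ) ≤ Γ₂.dist x y + Γ₂.dist y z := fun x y z => by
      exact_mod_cast h₂.dist_triangle (u := x) (v := y) (w := z)
    refine growth_transfer Γ₂ Γ₁ h₂ h₁ D₂ hD₂ D₁ hD₁ ψ C hC1 ?_ ?_ ?_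
    · intro v w
      have h := hlow (ψ v) (ψ w)
      have t1 := tri (φ (ψ v)) v (φ (ψ w))
      have t2 := tri v w (φ (ψ w))
      have hd : (0:ℝ) ≤ Γ₂.dist v w := by positivity
      have t3 : (Γ₂.dist (φ (ψ v)) (φ (ψ w)) : ℝ) ≤ Γ₂.dist v w + 2 * k := by
        linarith [hψ v, hψ' w]
      have t4 := mul_le_mul_of_nonneg_left t3 hk0.le
      have t5 : k * (Γ₂.dist v w : ℝ) ≤ C * Γ₂.dist v w :=
        mul_le_mul_of_nonneg_right (by linarith) hd
      have : (Γ₁.dist (ψ v) (ψ w) : ℝ) ≤ C * Γ₂.dist v w + C := by linarith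
      exact_mod_cast this
    · intro v w hvw
      have t := tri v (φ (ψ v)) w
      have t1 := hψ' v
      have t2 := hψ w
      rw [← hvw] at t2
      have : (Γ₂.dist v w : ℝ) ≤ C := by linarith
      exact_mod_cast this
    · intro u
      refine ⟨φ u, ?_⟩
      have h := hlow (ψ (φ u)) u
      have t := mul_le_mul_of_nonneg_left (hψ (φ u)) hk0.le
      have : (Γ₁.dist (ψ (φ u)) u : ℝ) ≤ C := by linarith
      exact_mod_cast this
end

section
/- Let k ≥ 1 and D ≥ 2 be integers and let f: ℕ → ℕ. Let π: V(X) → ℕ be a combinatorial metric graph bundle over the ray with properness function f, and assume every vertex of each fiber graph F_i has degree at most D within F_i. For a subset A ⊆ F₀, let Fl_k(A) denote the union of the images of all k-qi sections σ with σ(0) ∈ A. Then, setting c = D^{f(4k)+1} > 1, for every finite subset A ⊆ F₀ and every i ∈ ℕ, the set Fl_k(A) ∩ F_i is finite and has at most |A|·cⁱ elements. -/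
/-- The fiber over `i` of the projection `π`. -/
def bundleFiber {V : Type*} (π : V → ℕ) (i : ℕ) : Set V := {v | π v = i}

/-- A `k`-qi section of the bundle `π : V(X) → ℕ` over the ray. -/
def IsQISection {V : Type*} (X : SimpleGraph V) (π : V → ℕ) (k : ℝ) (σ : ℕ → V) : Prop :=
  (∀ n : ℕ, π (σ n) = n) ∧
    ∀ m n : ℕ,
      (1 / k) * |(m : ℝ) - (n : ℝ)| - k ≤ (X.dist (σ m) (σ n) : ℝ) ∧
      (X.dist (σ m) (σ n) : ℝ) ≤ k * |(m : ℝ) - (n : ℝ)| + k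

/-- The `k`-flow of a subset `A` of the zero fiber: the union of the images of
all `k`-qi sections through points of `A`. -/
def flowSet {V : Type*} (X : SimpleGraph V) (π : V → ℕ) (k : ℝ) (A : Set V) : Set V :=
  {x | ∃ σ : ℕ → V, IsQISection X π k σ ∧ σ 0 ∈ A ∧ ∃ n : ℕ, σ n = x}

theorem aux_ncard_cover {α β : Type*} (T : Set α) (hT : T.Finite) (g : α → Set β) (c : ℕ)
    (hg : ∀ y ∈ T, (g y).Finite ∧ (g y).ncard ≤ c) (S : Set β)
    (hS : ∀ x ∈ S, ∃ y ∈ T, x ∈ g y) : S.Finite ∧ S.ncard ≤ T.ncard * c := by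
  classical
  have hfin : (⋃ y ∈ T, g y).Finite := hT.biUnion (fun y hy => (hg y hy).1)
  have hsub : S ⊆ ⋃ y ∈ T, g y := by
    intro x hx
    obtain ⟨y, hy, hxy⟩ := hS x hx
    exact Set.mem_biUnion hy hxy
  refine ⟨hfin.subset hsub, (Set.ncard_le_ncard hsub hfin).trans ?_⟩
  clear hsub hS hfin
  induction T, hT using Set.Finite.induction_on with
  | empty => simp
  | @insert a T ha hT ih =>
    rw [Set.biUnion_insert, Set.ncard_insert_of_notMem ha hT]
    refine (Set.ncard_union_le _ _).trans ?_
    have h1 := ih (fun y hy => hg y (Set.mem_insert_of_mem _ hy))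
    have h2 := (hg a (Set.mem_insert _ _)).2
    rw [add_mul, one_mul]
    omega

theorem aux_ball {W : Type*} (G : SimpleGraph W) (hc : G.Connected) (D : ℕ) (hD : 2 ≤ D)
    (hdeg : ∀ x, (G.neighborSet x).Finite ∧ (G.neighborSet x).ncard ≤ D) (R : ℕ) :
    ∀ x, {y | G.dist x y ≤ R}.Finite ∧ {y | G.dist x y ≤ R}.ncard + 1 ≤ D ^ (R + 1) := by
  induction R with
  | zero =>
    intro x
    have h : {y | G.dist x y ≤ 0} = {x} := by
      ext y
      simp only [Set.mem_ofPred_eq, Set.mem_singleton_iff, Nat.le_zero]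
      rw [hc.dist_eq_zero_iff]
      exact eq_comm
    rw [h]
    simpa using hD
  | succ R ih =>
    intro x
    have hpos : 1 ≤ D ^ (R + 1) := Nat.one_le_pow _ _ (by omega)
    have key := aux_ncard_cover (G.neighborSet x) (hdeg x).1 (fun z => {y | G.dist z y ≤ R})
      (D ^ (R + 1) - 1) (fun z _ => ⟨(ih z).1, by have := (ih z).2; omega⟩)
      ({y | G.dist x y ≤ R + 1} \ {x}) (by
        rintro y ⟨hy, hne⟩
        obtain ⟨p, hp⟩ := hc.exists_walk_length_eq_dist x y
        cases p with
        | nil => exact absurd rfl hne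
        | @cons _ z _ hadj q =>
          refine ⟨z, hadj, ?_⟩
          have := SimpleGraph.dist_le q
          simp only [SimpleGraph.Walk.length_cons, Set.mem_ofPred_eq] at *
          omega)
    have hsub : {y | G.dist x y ≤ R + 1} ⊆ insert x ({y | G.dist x y ≤ R + 1} \ {x}) := by
      intro y hy
      by_cases h : y = x
      · exact Or.inl h
      · exact Or.inr ⟨hy, h⟩
    have hfin := key.1.insert x
    refine ⟨hfin.subset hsub, ?_⟩
    have h1 := Set.ncard_le_ncard hsub hfin
    have h2 := Set.ncard_insert_le x ({y | G.dist x y ≤ R + 1} \ {x})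
    have h3 : (G.neighborSet x).ncard * (D ^ (R + 1) - 1) ≤ D * (D ^ (R + 1) - 1) :=
      Nat.mul_le_mul_right _ (hdeg x).2
    have h4 : D * (D ^ (R + 1) - 1) + D = D ^ (R + 1 + 1) := by
      rw [pow_succ D (R + 1), Nat.mul_sub, mul_one, mul_comm (D ^ (R + 1)) D]
      have : D * 1 ≤ D * D ^ (R + 1) := Nat.mul_le_mul_left _ hpos
      omega
    have := key.2
    omega

/-- In a combinatorial metric graph bundle over the ray with properness
function `f` and fiberwise vertex degrees bounded by `D`, the `k`-flow of a
finite subset `A ⊆ F₀` meets the fiber `F_i` in at most `|A|·cⁱ` vertices,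
where `c = D^(f(4k)+1)`. -/
theorem stmt8 {V : Type*} (k D : ℕ) (hk : 1 ≤ k) (hD : 2 ≤ D) (f : ℕ → ℕ)
    (X : SimpleGraph V) (π : V → ℕ)
    (hconn : X.Connected) (hsurj : Function.Surjective π)
    (hlip : ∀ u v : V, X.Adj u v → π u ≤ π v + 1 ∧ π v ≤ π u + 1)
    (hfconn : ∀ i : ℕ, (X.induce (bundleFiber π i)).Connected)
    (hproper : ∀ (i r : ℕ), ∀ x y : bundleFiber π i,
        X.dist (x : V) (y : V) ≤ r → (X.induce (bundleFiber π i)).dist x y ≤ f r)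
    (hup : ∀ v : V, ∃ w : V, π w = π v + 1 ∧ X.Adj v w)
    (hdown : ∀ v : V, 1 ≤ π v → ∃ w : V, π w + 1 = π v ∧ X.Adj v w)
    (hdeg : ∀ (i : ℕ), ∀ x : bundleFiber π i,
        ((X.induce (bundleFiber π i)).neighborSet x).Finite ∧
        ((X.induce (bundleFiber π i)).neighborSet x).ncard ≤ D) :
    ∀ A : Set V, A ⊆ bundleFiber π 0 → A.Finite →
      ∀ i : ℕ, (flowSet X π (k : ℝ) A ∩ bundleFiber π i).Finite ∧
        (flowSet X π (k : ℝ) A ∩ bundleFiber π i).ncard ≤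
          A.ncard * (D ^ (f (4 * k) + 1)) ^ i := by
  intro A hA hAfin i
  induction i with
  | zero =>
    have hsub : flowSet X π (k : ℝ) A ∩ bundleFiber π 0 ⊆ A := by
      rintro x ⟨⟨σ, hσ, h0, n, rfl⟩, hx⟩
      have h : π (σ n) = 0 := hx
      rw [hσ.1 n] at h
      rw [h]
      exact h0
    exact ⟨hAfin.subset hsub, by simpa using Set.ncard_le_ncard hsub hAfin⟩
  | succ i ih =>
    have key := aux_ncard_cover (flowSet X π (k : ℝ) A ∩ bundleFiber π i) ih.1
      (fun y => {x | π x = i + 1 ∧ X.dist y x ≤ 2 * k}) (D ^ (f (4 * k) + 1)) ?_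
      (flowSet X π (k : ℝ) A ∩ bundleFiber π (i + 1)) ?_
    · refine ⟨key.1, key.2.trans ?_⟩
      rw [pow_succ (D ^ (f (4 * k) + 1)) i, ← mul_assoc]
      exact Nat.mul_le_mul_right _ ih.2
    · intro y _
      rcases Set.eq_empty_or_nonempty {x | π x = i + 1 ∧ X.dist y x ≤ 2 * k} with he | ⟨x₀, hx₀, hd₀⟩
      · simp only [he]
        simp
      · have hb := aux_ball (X.induce (bundleFiber π (i + 1))) (hfconn _) D hD (hdeg _)
          (f (4 * k)) ⟨x₀, hx₀⟩
        have hsub : {x | π x = i + 1 ∧ X.dist y x ≤ 2 * k} ⊆ Subtype.val ''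
            {z | (X.induce (bundleFiber π (i + 1))).dist ⟨x₀, hx₀⟩ z ≤ f (4 * k)} := by
          rintro x ⟨hx, hd⟩
          refine ⟨⟨x, hx⟩, hproper _ _ _ _ ?_, rfl⟩
          have h1 := hconn.dist_triangle (u := x₀) (v := y) (w := x)
          rw [SimpleGraph.dist_comm (u := x₀) (v := y)] at h1
          show X.dist x₀ x ≤ 4 * k
          omega
        have hfin := hb.1.image (Subtype.val)
        refine ⟨hfin.subset hsub, ?_⟩
        have h1 := Set.ncard_le_ncard hsub hfin
        have h2 := Set.ncard_image_le (f := Subtype.val) hb.1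
        have h3 := hb.2
        exact h1.trans (h2.trans (by omega))
    · rintro x ⟨⟨σ, hσ, h0, n, rfl⟩, hx⟩
      have h : π (σ n) = i + 1 := hx
      rw [hσ.1 n] at h
      subst h
      refine ⟨σ i, ⟨⟨σ, hσ, h0, i, rfl⟩, hσ.1 i⟩, hσ.1 _, ?_⟩
      have h2 := (hσ.2 i (i + 1)).2
      have h3 : |(i : ℝ) - ((i + 1 : ℕ) : ℝ)| = 1 := by
        push_cast
        rw [show (i : ℝ) - (i + 1) = -1 by ring]
        simp
      rw [h3] at h2
      have h4 : ((X.dist (σ i) (σ (i + 1)) : ℕ) : ℝ) ≤ ((2 * k : ℕ) : ℝ) := by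
        push_cast
        linarith
      exact_mod_cast h4
end

section
/- Let D' ≥ 0. Let X be a connected simple graph with graph metric d_X and π: V(X) → ℕ a surjection with |π(u) − π(v)| ≤ 1 for adjacent u, v, whose fibers F_j = π^{−1}(j) induce connected subgraphs of X with graph metrics d_j. For each j ∈ ℕ let φ_j: F_j → F_{j+1} be a map such that φ_j(y) is adjacent to y in X for every y ∈ F_j. Let (A_j)_{j∈ℕ} be nonempty subsets A_j ⊆ F_j such that for every j: every y ∈ A_j admits y' ∈ A_{j+1} with d_{j+1}(φ_j(y), y') ≤ D', and every y' ∈ A_{j+1} admits y ∈ A_j with d_{j+1}(φ_j(y), y') ≤ D'. Then for every i ∈ ℕ and every x ∈ A_i there exists a map σ: ℕ → V(X) with π(σ(j)) = j and σ(j) ∈ A_j for all j, σ(i) = x, and |m − n| ≤ d_X(σ(m), σ(n)) ≤ (D'+1)·|m − n| for all m, n ∈ ℕ; in particular σ is a 2(1+D')-qi section. -/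
/-- A section of a sequence of sets through a given point, with consecutive values related. -/
theorem exists_section_zero {V : Type*} (R : V → V → Prop) (A : ℕ → Set V)
    (hf : ∀ j, ∀ y ∈ A j, ∃ y' ∈ A (j + 1), R y y') (x : V) (hx : x ∈ A 0) :
    ∃ σ : ℕ → V, (∀ j, σ j ∈ A j) ∧ σ 0 = x ∧ ∀ j, R (σ j) (σ (j + 1)) := by
  choose f hfA hfR using hf
  let τ : ∀ j, {v // v ∈ A j} := fun j =>
    Nat.rec (motive := fun j => {v // v ∈ A j}) ⟨x, hx⟩
      (fun k v => ⟨f k v.1 v.2, hfA k v.1 v.2⟩) j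
  exact ⟨fun j => (τ j).1, fun j => (τ j).2, rfl, fun j => hfR j (τ j).1 (τ j).2⟩

theorem exists_section {V : Type*} (R : V → V → Prop) (i : ℕ) : ∀ (A : ℕ → Set V)
    (_ : ∀ j, ∀ y ∈ A j, ∃ y' ∈ A (j + 1), R y y')
    (_ : ∀ j, ∀ y' ∈ A (j + 1), ∃ y ∈ A j, R y y') (x : V) (_ : x ∈ A i),
    ∃ σ : ℕ → V, (∀ j, σ j ∈ A j) ∧ σ i = x ∧ ∀ j, R (σ j) (σ (j + 1)) := by
  induction i with
  | zero => exact fun A hf _ x hx => exists_section_zero R A hf x hx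
  | succ i ih =>
    intro A hf hb x hx
    obtain ⟨σ, h1, h2, h3⟩ := ih (fun j => A (j + 1)) (fun j => hf (j + 1))
      (fun j => hb (j + 1)) x hx
    obtain ⟨y, hy, hyR⟩ := hb 0 (σ 0) (h1 0)
    refine ⟨fun j => Nat.casesOn j y σ, ?_, h2, ?_⟩
    · rintro (_ | j)
      · exact hy
      · exact h1 j
    · rintro (_ | j)
      · exact hyR
      · exact h3 j

theorem walk_lip {V : Type*} (X : SimpleGraph V) (π : V → ℕ)
    (hlip : ∀ u v : V, X.Adj u v → π u ≤ π v + 1 ∧ π v ≤ π u + 1) {u v : V} (p : X.Walk u v) :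
    π u ≤ π v + p.length ∧ π v ≤ π u + p.length := by
  induction p with
  | nil => simp
  | cons h p ih =>
    have := hlip _ _ h
    simp only [SimpleGraph.Walk.length_cons]
    omega

/-- Given fiberwise sets `A_j` in a metric graph bundle over the ray whose
consecutive levels are at fiberwise Hausdorff distance at most `D'` under the
natural maps `φ_j`, through every point of `A_i` there is a section `σ` with
`σ(j) ∈ A_j` for all `j` satisfying `|m−n| ≤ d_X(σ m, σ n) ≤ (D'+1)|m−n|`. -/
theorem stmt10 {V : Type*} (D' : ℝ) (hD' : 0 ≤ D')
    (X : SimpleGraph V) (π : V → ℕ)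
    (hconn : X.Connected) (hsurj : Function.Surjective π)
    (hlip : ∀ u v : V, X.Adj u v → π u ≤ π v + 1 ∧ π v ≤ π u + 1)
    (hfconn : ∀ j : ℕ, (X.induce {v | π v = j}).Connected)
    (φ : ∀ j : ℕ, {v | π v = j} → {v | π v = j + 1})
    (hφ : ∀ (j : ℕ) (y : {v | π v = j}), X.Adj ((φ j y : V)) (y : V))
    (A : ℕ → Set V) (hA : ∀ j : ℕ, A j ⊆ {v | π v = j})
    (hAne : ∀ j : ℕ, (A j).Nonempty)
    (hfwd : ∀ (j : ℕ) (y : {v | π v = j}), (y : V) ∈ A j →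
        ∃ y' : {v | π v = j + 1}, (y' : V) ∈ A (j + 1) ∧
          (((X.induce {v | π v = j + 1}).dist (φ j y) y' : ℕ) : ℝ) ≤ D')
    (hbwd : ∀ (j : ℕ) (y' : {v | π v = j + 1}), (y' : V) ∈ A (j + 1) →
        ∃ y : {v | π v = j}, (y : V) ∈ A j ∧
          (((X.induce {v | π v = j + 1}).dist (φ j y) y' : ℕ) : ℝ) ≤ D') :
    ∀ (i : ℕ) (x : V), x ∈ A i →
      ∃ σ : ℕ → V, (∀ j : ℕ, π (σ j) = j) ∧ (∀ j : ℕ, σ j ∈ A j) ∧ σ i = x ∧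
        ∀ m n : ℕ,
          |(m : ℝ) - (n : ℝ)| ≤ (X.dist (σ m) (σ n) : ℝ) ∧
          (X.dist (σ m) (σ n) : ℝ) ≤ (D' + 1) * |(m : ℝ) - (n : ℝ)| := by
  intro i x hx
  have step : ∀ (j : ℕ) (y : {v | π v = j}) (y' : {v | π v = j + 1}),
      (((X.induce {v | π v = j + 1}).dist (φ j y) y' : ℕ) : ℝ) ≤ D' →
      (X.dist (y : V) (y' : V) : ℝ) ≤ D' + 1 := by
    intro j y y' h
    obtain ⟨p, hp⟩ := (hfconn (j + 1)).exists_walk_length_eq_dist (φ j y) y'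
    obtain ⟨q, hq⟩ : ∃ q : X.Walk (φ j y : V) (y' : V), q.length = p.length :=
      ⟨p.map (SimpleGraph.Embedding.induce _).toHom, SimpleGraph.Walk.length_map _ _⟩
    have h1 := SimpleGraph.dist_le (SimpleGraph.Walk.cons (hφ j y).symm q)
    rw [SimpleGraph.Walk.length_cons, hq, hp] at h1
    have h2 : (X.dist (y : V) (y' : V) : ℝ)
        ≤ (((X.induce {v | π v = j + 1}).dist (φ j y) y' + 1 : ℕ) : ℝ) := Nat.cast_le.mpr h1
    push_cast at h2
    linarith
  obtain ⟨σ, h1, h2, h3⟩ := exists_section (fun u v => (X.dist u v : ℝ) ≤ D' + 1) i A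
    (fun j y hy => by
      obtain ⟨y', hy', h⟩ := hfwd j ⟨y, hA j hy⟩ hy
      exact ⟨y', hy', step j _ _ h⟩)
    (fun j y' hy' => by
      obtain ⟨y, hy, h⟩ := hbwd j ⟨y', hA (j + 1) hy'⟩ hy'
      exact ⟨y, hy, step j _ _ h⟩) x hx
  have hπ : ∀ j, π (σ j) = j := fun j => hA j (h1 j)
  have up : ∀ m k : ℕ, (X.dist (σ m) (σ (m + k)) : ℝ) ≤ (D' + 1) * k := by
    intro m k
    induction k with
    | zero => simp
    | succ k ih =>
      have h4 : (X.dist (σ m) (σ (m + k + 1)) : ℝ)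
          ≤ ((X.dist (σ m) (σ (m + k)) + X.dist (σ (m + k)) (σ (m + k + 1)) : ℕ) : ℝ) :=
        Nat.cast_le.mpr hconn.dist_triangle
      have h5 := h3 (m + k)
      push_cast at h4 ⊢
      rw [← add_assoc]
      linarith
  refine ⟨σ, hπ, h1, h2, fun m n => ⟨?_, ?_⟩⟩
  · obtain ⟨p, hp⟩ := hconn.exists_walk_length_eq_dist (σ m) (σ n)
    have h6 := walk_lip X π hlip p
    rw [hπ, hπ, hp] at h6
    have h7 : (m : ℝ) ≤ n + X.dist (σ m) (σ n) := by exact_mod_cast h6.1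
    have h8 : (n : ℝ) ≤ m + X.dist (σ m) (σ n) := by exact_mod_cast h6.2
    rw [abs_le]
    constructor <;> linarith
  · rcases le_total m n with h | h
    · obtain ⟨k, rfl⟩ := Nat.exists_eq_add_of_le h
      have := up m k
      simpa using this
    · obtain ⟨k, rfl⟩ := Nat.exists_eq_add_of_le h
      have := up n k
      rw [SimpleGraph.dist_comm]
      simpa using this
end

section
/- Let δ ≥ 0 and K ≥ 1, and set D = Kδ + K²/2. Let X be a geodesic metric space whose geodesic triangles are δ-thin, and let x, y, z, w ∈ X. Suppose α is a geodesic from z to y and β is a geodesic from y to w such that the arclength parametrization of the concatenation α·β — the map γ: [0, d(z,y)+d(y,w)] → X with γ(s) = α(s) for 0 ≤ s ≤ d(z,y) and γ(s) = β(s − d(z,y)) for d(z,y) ≤ s — is a K-quasigeodesic. Then min{(x,z)_y, (x,w)_y} ≤ D, and moreover (z,w)_y ≤ D. -/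
/-- Gromov product `(x,y)_p = ½(d(p,x)+d(p,y)−d(x,y))`. -/
noncomputable def gromovProd {X : Type*} [MetricSpace X] (p x y : X) : ℝ :=
  (dist p x + dist p y - dist x y) / 2

/-- `γ` is a geodesic from `x` to `y`, parametrized on `[0, dist x y]`. -/
def IsGeodesicFrom {X : Type*} [MetricSpace X] (γ : ℝ → X) (x y : X) : Prop :=
  γ 0 = x ∧ γ (dist x y) = y ∧
    ∀ s ∈ Set.Icc (0 : ℝ) (dist x y), ∀ t ∈ Set.Icc (0 : ℝ) (dist x y),
      dist (γ s) (γ t) = |s - t|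

/-- Every pair of points is joined by a geodesic. -/
def IsGeodesicSpace (X : Type*) [MetricSpace X] : Prop :=
  ∀ x y : X, ∃ γ : ℝ → X, IsGeodesicFrom γ x y

/-- Geodesic triangles are δ-thin. -/
def ThinTriangles (X : Type*) [MetricSpace X] (δ : ℝ) : Prop :=
  ∀ x y z : X, ∀ α β : ℝ → X, IsGeodesicFrom α y x → IsGeodesicFrom β y z →
    ∀ t : ℝ, 0 ≤ t → t ≤ gromovProd y x z → dist (α t) (β t) ≤ δ

/-- If the concatenation of geodesics `[z,y]` and `[y,w]` is a
`K`-quasigeodesic, then `min{(x,z)_y, (x,w)_y} ≤ Kδ + K²/2` for every `x`,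
and moreover `(z,w)_y ≤ Kδ + K²/2`. -/
theorem stmt13 {X : Type*} [MetricSpace X] (δ K : ℝ) (hδ : 0 ≤ δ) (hK : 1 ≤ K)
    (hgeo : IsGeodesicSpace X) (hthin : ThinTriangles X δ)
    (x y z w : X) (α β : ℝ → X)
    (hα : IsGeodesicFrom α z y) (hβ : IsGeodesicFrom β y w)
    (γ : ℝ → X)
    (hγdef : ∀ s : ℝ, γ s = if s ≤ dist z y then α s else β (s - dist z y))
    (hγqg : ∀ s ∈ Set.Icc (0 : ℝ) (dist z y + dist y w),
        ∀ t ∈ Set.Icc (0 : ℝ) (dist z y + dist y w),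
          (1 / K) * |s - t| - K ≤ dist (γ s) (γ t) ∧
          dist (γ s) (γ t) ≤ K * |s - t| + K) :
    min (gromovProd y x z) (gromovProd y x w) ≤ K * δ + K ^ 2 / 2 ∧
      gromovProd y z w ≤ K * δ + K ^ 2 / 2 := by
  have hαr : IsGeodesicFrom (fun t => α (dist z y - t)) y z := by
    obtain ⟨h0, h1, h2⟩ := hα
    refine ⟨by simpa using h1, by simpa [dist_comm y z] using h0, ?_⟩
    intro s hs t ht
    rw [dist_comm y z] at hs ht
    have := h2 (dist z y - s) ⟨by linarith [hs.2], by linarith [hs.1]⟩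
      (dist z y - t) ⟨by linarith [ht.2], by linarith [ht.1]⟩
    rw [this, abs_sub_comm]
    congr 1
    ring
  have hK0 : 0 < K := by linarith
  have key : ∀ t : ℝ, t ≤ dist z y → t ≤ dist y w →
      (0 ≤ t → dist (α (dist z y - t)) (β t) ≤ 2 * δ) → t ≤ K * δ + K ^ 2 / 2 := by
    intro t h1 h2 h3
    have hD : 0 ≤ K * δ + K ^ 2 / 2 := by positivity
    rcases le_or_gt t 0 with h | h
    · linarith
    have h4 := h3 h.le
    have h5 := (hγqg (dist z y - t) ⟨by linarith, by linarith [dist_nonneg (x := y) (y := w)]⟩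
      (dist z y + t) ⟨by linarith, by linarith⟩).1
    rw [hγdef, hγdef, if_pos (by linarith), if_neg (by linarith), add_sub_cancel_left,
      show dist z y - t - (dist z y + t) = -(2 * t) by ring, abs_neg,
      abs_of_pos (by linarith)] at h5
    have h6 : 1 / K * (2 * t) ≤ 2 * δ + K := by linarith
    rw [one_div, inv_mul_le_iff₀ hK0] at h6
    nlinarith
  have g1 : ∀ a b : X, gromovProd y a b ≤ dist y a := by
    intro a b
    unfold gromovProd
    linarith [dist_triangle y a b]
  have g2 : ∀ a b : X, gromovProd y a b ≤ dist y b := by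
    intro a b
    unfold gromovProd
    linarith [dist_triangle y b a, dist_comm a b]
  constructor
  · obtain ⟨σ, hσ⟩ := hgeo y x
    refine key _ ?_ ?_ ?_
    · rw [dist_comm z y]
      exact (min_le_left _ _).trans (g2 _ _)
    · exact (min_le_right _ _).trans (g2 _ _)
    · intro h0
      have a1 := hthin x y z σ _ hσ hαr _ h0 (min_le_left _ _)
      have a2 := hthin x y w σ β hσ hβ _ h0 (min_le_right _ _)
      have a3 := dist_triangle_left
        (α (dist z y - min (gromovProd y x z) (gromovProd y x w)))
        (β (min (gromovProd y x z) (gromovProd y x w)))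
        (σ (min (gromovProd y x z) (gromovProd y x w)))
      linarith
  · refine key _ ?_ (g2 _ _) ?_
    · rw [dist_comm z y]
      exact g1 _ _
    · intro h0
      have a1 := hthin z y w _ β hαr hβ _ h0 le_rfl
      linarith
end

section
/- Let δ ≥ 0 and C ≥ 0, and let X be a geodesic metric space whose geodesic triangles are δ-thin. Let x, y, z ∈ X with (x,z)_y ≤ C, let α be a geodesic from x to y and β a geodesic from y to z, and let γ: [0, d(x,y)+d(y,z)] → X be the arclength parametrization of the concatenation α·β (so γ(s) = α(s) for s ≤ d(x,y) and γ(s) = β(s − d(x,y)) afterwards). Then for all s, t in the domain, |s − t| − (2C + δ) ≤ d(γ(s), γ(t)) ≤ |s − t|. -/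
/-- A broken geodesic through a corner `y` with Gromov product `(x,z)_y ≤ C`
is a `(2C+δ)`-quasigeodesic, with the additive two-sided bound
`|s−t| − (2C+δ) ≤ d(γ s, γ t) ≤ |s−t|`. -/
theorem stmt14 {X : Type*} [MetricSpace X] (δ C : ℝ) (hδ : 0 ≤ δ) (hC : 0 ≤ C)
    (hgeo : IsGeodesicSpace X) (hthin : ThinTriangles X δ)
    (x y z : X) (hgp : gromovProd y x z ≤ C)
    (α β : ℝ → X) (hα : IsGeodesicFrom α x y) (hβ : IsGeodesicFrom β y z)
    (γ : ℝ → X)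
    (hγdef : ∀ s : ℝ, γ s = if s ≤ dist x y then α s else β (s - dist x y)) :
    ∀ s ∈ Set.Icc (0 : ℝ) (dist x y + dist y z),
      ∀ t ∈ Set.Icc (0 : ℝ) (dist x y + dist y z),
        |s - t| - (2 * C + δ) ≤ dist (γ s) (γ t) ∧ dist (γ s) (γ t) ≤ |s - t| := by
  have key : ∀ s ∈ Set.Icc (0 : ℝ) (dist x y + dist y z),
      ∀ t ∈ Set.Icc (0 : ℝ) (dist x y + dist y z), s ≤ t →
        (t - s) - (2 * C + δ) ≤ dist (γ s) (γ t) ∧ dist (γ s) (γ t) ≤ t - s := by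
    rintro s ⟨hs0, hs1⟩ t ⟨ht0, ht1⟩ hst
    obtain ⟨ha0, ha1, ha⟩ := hα
    obtain ⟨hb0, hb1, hb⟩ := hβ
    have hxy : 0 ≤ dist x y := dist_nonneg
    have hyz : 0 ≤ dist y z := dist_nonneg
    rw [hγdef s, hγdef t]
    by_cases h1 : t ≤ dist x y
    · rw [if_pos (hst.trans h1), if_pos h1, ha s ⟨hs0, hst.trans h1⟩ t ⟨ht0, h1⟩,
        abs_sub_comm, abs_of_nonneg (by linarith)]
      constructor <;> linarith
    · push Not at h1
      rw [if_neg (not_le.mpr h1)]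
      by_cases h2 : s ≤ dist x y
      · rw [if_pos h2]
        have e1 := ha 0 ⟨le_rfl, hxy⟩ s ⟨hs0, h2⟩
        have e2 := ha s ⟨hs0, h2⟩ (dist x y) ⟨hxy, le_rfl⟩
        have e3 := hb 0 ⟨le_rfl, hyz⟩ (t - dist x y) ⟨by linarith, by linarith⟩
        have e4 := hb (t - dist x y) ⟨by linarith, by linarith⟩ (dist y z) ⟨hyz, le_rfl⟩
        rw [abs_of_nonpos (by linarith)] at e1 e2 e3 e4
        rw [ha0] at e1
        rw [ha1] at e2
        rw [hb0] at e3
        rw [hb1] at e4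
        have t1 := dist_triangle (α s) y (β (t - dist x y))
        have t2 := dist_triangle4 x (α s) (β (t - dist x y)) z
        unfold gromovProd at hgp
        rw [dist_comm y x] at hgp
        constructor <;> linarith
      · push Not at h2
        rw [if_neg (not_le.mpr h2), hb _ ⟨by linarith, by linarith⟩ _ ⟨by linarith, by linarith⟩,
          abs_of_nonpos (by linarith)]
        constructor <;> linarith
  intro s hs t ht
  rcases le_total s t with h | h
  · rw [abs_sub_comm, abs_of_nonneg (sub_nonneg.mpr h)]
    exact key s hs t ht h
  · rw [abs_of_nonneg (sub_nonneg.mpr h), dist_comm]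
    exact key t ht s hs h
end

section
/- For all δ ≥ 0 and C ≥ 0 there exist constants D(δ,C) > 0 and K(δ,C) ≥ 1, depending only on δ and C, with the following property. Let X be a geodesic metric space whose geodesic triangles are δ-thin, let x₀, x₁, …, x_n ∈ X be points with d(x_{i−1}, x_i) ≥ D(δ,C) for all 1 ≤ i ≤ n and with Gromov products (x_{i−1}, x_{i+1})_{x_i} ≤ C for all 1 ≤ i ≤ n−1, and for each 1 ≤ i ≤ n let α_i be a geodesic from x_{i−1} to x_i. Then the arclength parametrization of the concatenation α₁·α₂⋯α_n is a K(δ,C)-quasigeodesic. -/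
lemma four_point {X : Type*} [MetricSpace X] {δ : ℝ} (hg : IsGeodesicSpace X)
    (ht : ThinTriangles X δ) (w x y z : X) :
    min (gromovProd w x y) (gromovProd w y z) - δ ≤ gromovProd w x z := by
  obtain ⟨a, ha⟩ := hg w x
  obtain ⟨b, hb⟩ := hg w y
  obtain ⟨c, hc⟩ := hg w z
  set t := min (gromovProd w x y) (gromovProd w y z) with htdef
  have h1 : t ≤ gromovProd w x y := min_le_left _ _
  have h2 : t ≤ gromovProd w y z := min_le_right _ _
  have h0 : 0 ≤ t := by
    refine le_min ?_ ?_ <;> unfold gromovProd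
    · linarith [dist_triangle_left x y w]
    · linarith [dist_triangle_left y z w]
  have hab := ht x w y a b ha hb t h0 h1
  have hbc := ht y w z b c hb hc t h0 h2
  have htx : t ≤ dist w x := by
    refine h1.trans ?_
    unfold gromovProd
    linarith [dist_triangle w x y]
  have htz : t ≤ dist w z := by
    refine h2.trans ?_
    unfold gromovProd
    linarith [dist_triangle w z y, dist_comm y z]
  have hax := ha.2.2 t ⟨h0, htx⟩ (dist w x) ⟨dist_nonneg, le_rfl⟩
  have hcz := hc.2.2 t ⟨h0, htz⟩ (dist w z) ⟨dist_nonneg, le_rfl⟩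
  rw [ha.2.1, abs_of_nonpos (by linarith)] at hax
  rw [hc.2.1, abs_of_nonpos (by linarith)] at hcz
  have := dist_triangle4 x (a t) (c t) z
  have := dist_triangle (a t) (b t) (c t)
  rw [dist_comm x (a t)] at *
  unfold gromovProd
  linarith

/-- Gromov products along the chain starting at a point `p` of segment `i`. -/
lemma chain_prod {X : Type*} [MetricSpace X] {δ C D : ℝ} (hδ : 0 ≤ δ)
    (hD : 2 * C + 2 * δ < D)
    (hg : IsGeodesicSpace X) (ht : ThinTriangles X δ) (n : ℕ) (x : ℕ → X)
    (hd : ∀ i : ℕ, i < n → D ≤ dist (x i) (x (i + 1)))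
    (hp : ∀ i : ℕ, i + 2 ≤ n → gromovProd (x (i + 1)) (x i) (x (i + 2)) ≤ C)
    (i : ℕ) (p : X)
    (hpi : dist (x i) p + dist p (x (i + 1)) = dist (x i) (x (i + 1))) (m : ℕ) :
    ∀ q : X, i + m + 2 ≤ n →
      dist (x (i + m + 1)) q + dist q (x (i + m + 2)) = dist (x (i + m + 1)) (x (i + m + 2)) →
      gromovProd (x (i + m + 1)) p q ≤ C + δ := by
  have mono : ∀ k : ℕ, k + 2 ≤ n → ∀ q : X,
      dist (x (k + 1)) q + dist q (x (k + 2)) = dist (x (k + 1)) (x (k + 2)) →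
      gromovProd (x (k + 1)) (x k) q ≤ C := by
    intro k hk q hq
    have := hp k hk
    unfold gromovProd at *
    linarith [dist_triangle (x k) q (x (k + 2))]
  induction m with
  | zero =>
    intro q hn hq
    have := mono i hn q hq
    simp only [add_zero] at *
    unfold gromovProd at *
    linarith [dist_triangle (x i) p q, dist_comm p (x (i + 1)), dist_comm (x i) (x (i + 1))]
  | succ m ih =>
    intro q hn hq
    have e1 : i + (m + 1) + 1 = i + m + 2 := by ring
    have e2 : i + (m + 1) + 2 = i + m + 3 := by ring
    rw [e1, e2] at *
    have h1 := ih (x (i + m + 2)) (by omega) (by simp)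
    have h2 := mono (i + m + 1) hn q hq
    have h3 := four_point hg ht (x (i + m + 2)) (x (i + m + 1)) p q
    have h4 := hd (i + m + 1) (by omega)
    simp only [show i + m + 1 + 1 = i + m + 2 from rfl] at *
    by_contra hcon
    push Not at hcon
    have h5 : C + δ < gromovProd (x (i + m + 2)) (x (i + m + 1)) p := by
      unfold gromovProd at h1 ⊢
      linarith [dist_comm (x (i + m + 2)) (x (i + m + 1)), dist_comm (x (i + m + 2)) p,
        dist_comm (x (i + m + 1)) p]
    have := lt_min h5 hcon
    linarith

lemma chain_dist {X : Type*} [MetricSpace X] {δ C D : ℝ} (hδ : 0 ≤ δ) (hC : 0 ≤ C)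
    (hD : 4 * C + 4 * δ < D)
    (hg : IsGeodesicSpace X) (ht : ThinTriangles X δ) (n : ℕ) (x : ℕ → X)
    (hd : ∀ i : ℕ, i < n → D ≤ dist (x i) (x (i + 1)))
    (hp : ∀ i : ℕ, i + 2 ≤ n → gromovProd (x (i + 1)) (x i) (x (i + 2)) ≤ C)
    (S : ℕ → ℝ) (hS : ∀ i, S (i + 1) = S i + dist (x i) (x (i + 1)))
    (i : ℕ) (p : X)
    (hpi : dist (x i) p + dist p (x (i + 1)) = dist (x i) (x (i + 1))) (m : ℕ)
    (hm : i + m + 1 ≤ n) :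
    dist p (x (i + 1)) + (S (i + m + 1) - S (i + 1)) / 2 ≤ dist p (x (i + m + 1)) ∧
    dist p (x (i + m + 1)) ≤ dist p (x (i + 1)) + (S (i + m + 1) - S (i + 1)) := by
  induction m with
  | zero => simp
  | succ m ih =>
    have ih := ih (by omega)
    have e1 : i + (m + 1) + 1 = i + m + 2 := by ring
    rw [e1] at *
    have h1 := chain_prod hδ (by linarith) hg ht n x hd hp i p hpi m (x (i + m + 2)) hm (by simp)
    have h2 := hd (i + m + 1) (by omega)
    have h3 := hS (i + m + 1)
    simp only [show i + m + 1 + 1 = i + m + 2 from rfl] at *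
    have h4 := dist_triangle p (x (i + m + 1)) (x (i + m + 2))
    unfold gromovProd at h1
    have := dist_comm p (x (i + m + 1))
    constructor <;> linarith

lemma locate (S : ℕ → ℝ) (s : ℝ) (h0 : S 0 ≤ s) (n : ℕ) (hn : 1 ≤ n) (hs : s ≤ S n) :
    ∃ i < n, S i ≤ s ∧ s ≤ S (i + 1) := by
  induction n, hn using Nat.le_induction with
  | base => exact ⟨0, by norm_num, h0, hs⟩
  | succ n hn ih =>
    rcases le_total s (S n) with h | h
    · obtain ⟨i, hi, h'⟩ := ih h
      exact ⟨i, by omega, h'⟩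
    · exact ⟨n, by omega, h, hs⟩

/-- Two-sided bound for ordered parameters. -/
lemma ordered_bound {X : Type*} [MetricSpace X] {δ C D : ℝ} (hδ : 0 ≤ δ) (hC : 0 ≤ C)
    (hD : 4 * C + 4 * δ < D)
    (hg : IsGeodesicSpace X) (ht : ThinTriangles X δ) (n : ℕ) (x : ℕ → X) (α : ℕ → ℝ → X)
    (hd : ∀ i : ℕ, i < n → D ≤ dist (x i) (x (i + 1)))
    (hp : ∀ i : ℕ, i + 2 ≤ n → gromovProd (x (i + 1)) (x i) (x (i + 2)) ≤ C)
    (hα : ∀ i : ℕ, i < n → IsGeodesicFrom (α i) (x i) (x (i + 1)))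
    (S : ℕ → ℝ) (hS0 : S 0 = 0) (hS : ∀ i, S (i + 1) = S i + dist (x i) (x (i + 1)))
    (γ : ℝ → X)
    (hγ : ∀ i : ℕ, i < n → ∀ t ∈ Set.Icc (0 : ℝ) (dist (x i) (x (i + 1))),
      γ (S i + t) = α i t)
    (s t : ℝ) (hs : 0 ≤ s) (hst : s ≤ t) (htn : t ≤ S n) :
    (t - s) / 2 - (2 * C + 2 * δ) ≤ dist (γ s) (γ t) ∧ dist (γ s) (γ t) ≤ t - s := by
  rcases hst.eq_or_lt with rfl | hlt
  · simp; linarith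
  have hn : 1 ≤ n := by
    by_contra h
    have : n = 0 := by omega
    subst this
    linarith
  have hmono : Monotone S := monotone_nat_of_le_succ fun i => by
    rw [hS]; linarith [dist_nonneg (x := x i) (y := x (i + 1))]
  have key : ∀ i < n, ∀ u v : ℝ, S i ≤ u → u ≤ v → v ≤ S (i + 1) →
      dist (γ u) (γ v) = v - u := by
    intro i hi u v h1 h2 h3
    rw [hS] at h3
    have hu : u - S i ∈ Set.Icc (0 : ℝ) (dist (x i) (x (i + 1))) :=
      ⟨by linarith, by linarith⟩
    have hv : v - S i ∈ Set.Icc (0 : ℝ) (dist (x i) (x (i + 1))) :=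
      ⟨by linarith, by linarith⟩
    have eu := hγ i hi _ hu
    have ev := hγ i hi _ hv
    rw [add_sub_cancel] at eu ev
    rw [eu, ev, (hα i hi).2.2 _ hu _ hv, abs_of_nonpos (by linarith)]
    ring
  have xl : ∀ i < n, γ (S i) = x i := by
    intro i hi
    have := hγ i hi 0 ⟨le_rfl, dist_nonneg⟩
    rw [add_zero] at this
    rw [this, (hα i hi).1]
  have xr : ∀ i < n, γ (S (i + 1)) = x (i + 1) := by
    intro i hi
    rw [hS, hγ i hi _ ⟨dist_nonneg, le_rfl⟩, (hα i hi).2.1]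
  have seg : ∀ i < n, ∀ u : ℝ, S i ≤ u → u ≤ S (i + 1) →
      dist (x i) (γ u) = u - S i ∧ dist (γ u) (x (i + 1)) = S (i + 1) - u := by
    intro i hi u h1 h2
    have a := key i hi (S i) u le_rfl h1 h2
    have b := key i hi u (S (i + 1)) h1 h2 le_rfl
    rw [xl i hi] at a
    rw [xr i hi] at b
    exact ⟨a, b⟩
  obtain ⟨i, hi, his, his'⟩ := locate S s (by linarith) n hn (by linarith)
  obtain ⟨j, hj, hjt, hjt'⟩ := locate S t (by linarith) n hn htn
  rcases lt_trichotomy i j with hij | rfl | hij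
  · obtain ⟨m, rfl⟩ : ∃ m, j = i + m + 1 := ⟨j - i - 1, by omega⟩
    obtain ⟨a1, a2⟩ := seg i hi s his his'
    obtain ⟨b1, b2⟩ := seg _ hj t hjt hjt'
    have hpi : dist (x i) (γ s) + dist (γ s) (x (i + 1)) = dist (x i) (x (i + 1)) := by
      linarith [hS i]
    have c1 := chain_prod hδ (by linarith) hg ht n x hd hp i _ hpi m (γ t) (by omega)
      (by
        have := hS (i + m + 1)
        simp only [show i + m + 1 + 1 = i + m + 2 from rfl] at *
        linarith)
    obtain ⟨c2, c3⟩ := chain_dist hδ hC hD hg ht n x hd hp S hS i _ hpi m (by omega)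
    unfold gromovProd at c1
    have := dist_comm (γ s) (x (i + m + 1))
    have := dist_triangle (γ s) (x (i + m + 1)) (γ t)
    constructor <;> linarith
  · rw [key i hi s t his hst hjt']
    constructor <;> linarith
  · have := hmono (show j + 1 ≤ i by omega)
    linarith

/-- Local-to-global for broken geodesics: if consecutive points are at
distance at least `D(δ,C)` and the Gromov products at the corners are at most
`C`, then the arclength parametrization of the concatenation of the geodesic
segments is a `K(δ,C)`-quasigeodesic. -/
theorem stmt15 (δ C : ℝ) (hδ : 0 ≤ δ) (hC : 0 ≤ C) :
    ∃ D K : ℝ, 0 < D ∧ 1 ≤ K ∧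
      ∀ (X : Type*) [MetricSpace X], IsGeodesicSpace X → ThinTriangles X δ →
        ∀ (n : ℕ) (x : ℕ → X) (α : ℕ → ℝ → X),
          (∀ i : ℕ, i < n → D ≤ dist (x i) (x (i + 1))) →
          (∀ i : ℕ, 1 ≤ i → i + 1 ≤ n →
              gromovProd (x i) (x (i - 1)) (x (i + 1)) ≤ C) →
          (∀ i : ℕ, i < n → IsGeodesicFrom (α i) (x i) (x (i + 1))) →
          ∀ γ : ℝ → X,
            (∀ i : ℕ, i < n → ∀ t ∈ Set.Icc (0 : ℝ) (dist (x i) (x (i + 1))),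
                γ ((∑ j ∈ Finset.range i, dist (x j) (x (j + 1))) + t) = α i t) →
            ∀ s ∈ Set.Icc (0 : ℝ) (∑ j ∈ Finset.range n, dist (x j) (x (j + 1))),
              ∀ t ∈ Set.Icc (0 : ℝ) (∑ j ∈ Finset.range n, dist (x j) (x (j + 1))),
                (1 / K) * |s - t| - K ≤ dist (γ s) (γ t) ∧
                dist (γ s) (γ t) ≤ K * |s - t| + K := by
  refine ⟨4 * C + 4 * δ + 1, 2 + 2 * C + 2 * δ, by linarith, by linarith, ?_⟩
  intro X _ hg ht n x α hd hp hα γ hγ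
  have hp' : ∀ i : ℕ, i + 2 ≤ n → gromovProd (x (i + 1)) (x i) (x (i + 2)) ≤ C := fun i hi =>
    hp (i + 1) (by omega) (by omega)
  have main := ordered_bound hδ hC (by linarith) hg ht n x α hd hp' hα
    (fun i => ∑ j ∈ Finset.range i, dist (x j) (x (j + 1))) (by simp)
    (fun i => Finset.sum_range_succ _ _) γ hγ
  have fin : ∀ r d : ℝ, 0 ≤ r → r / 2 - (2 * C + 2 * δ) ≤ d → d ≤ r →
      1 / (2 + 2 * C + 2 * δ) * r - (2 + 2 * C + 2 * δ) ≤ d ∧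
      d ≤ (2 + 2 * C + 2 * δ) * r + (2 + 2 * C + 2 * δ) := by
    intro r d hr h1 h2
    have h3 : 1 / (2 + 2 * C + 2 * δ) ≤ 1 / 2 :=
      one_div_le_one_div_of_le (by norm_num) (by linarith)
    have h4 := mul_le_mul_of_nonneg_right h3 hr
    constructor
    · linarith
    · nlinarith [mul_nonneg hC hr, mul_nonneg hδ hr]
  intro s hs t ht'
  rcases le_total s t with h | h
  · obtain ⟨a, b⟩ := main s t hs.1 h ht'.2
    rw [abs_sub_comm, abs_of_nonneg (sub_nonneg.2 h)]
    exact fin _ _ (sub_nonneg.2 h) a b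
  · obtain ⟨a, b⟩ := main t s ht'.1 h hs.2
    rw [abs_of_nonneg (sub_nonneg.2 h), dist_comm]
    exact fin _ _ (sub_nonneg.2 h) a b
end

section
/- Let k ≥ 1 and let φ: X → Y be a k-quasiisometric embedding between geodesic metric spaces. Let x, x₁, x₂ ∈ X, let n ≥ 1 be an integer, and let γ be a continuous path of finite length in X from x₁ to x₂ such that d(x, p) ≥ n for every point p on γ. Then there exists a continuous path γ' in Y from φ(x₁) to φ(x₂) such that: (a) d(φ(x), q) > (n−1)/k − 3k for every point q on γ'; (b) the Hausdorff distance between φ(γ) and γ' is at most 4k; and (c) length(γ') ≤ 2k·length(γ) + 2k. -/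
theorem seg_aux {Y : Type*} [MetricSpace Y] (hY : IsGeodesicSpace Y) (a b : ℝ) (hab : a ≤ b)
    (p q : Y) (hpq : a = b → p = q) :
    ∃ σ : ℝ → Y, ContinuousOn σ (Set.Icc a b) ∧ σ a = p ∧ σ b = q ∧
      (∀ t ∈ Set.Icc a b, dist (σ t) p ≤ dist p q) ∧
      eVariationOn σ (Set.Icc a b) ≤ ENNReal.ofReal (dist p q) := by
  obtain ⟨g, g0, g1, hg⟩ := hY p q
  have hd : 0 ≤ dist p q := dist_nonneg
  have hmaps : Set.MapsTo (fun t => (t - a) / (b - a) * dist p q) (Set.Icc a b)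
      (Set.Icc 0 (dist p q)) := by
    intro t ht
    have h1 : 0 ≤ (t - a) / (b - a) :=
      div_nonneg (by linarith [ht.1]) (by linarith)
    have h2 : (t - a) / (b - a) ≤ 1 :=
      div_le_one_of_le₀ (by linarith [ht.2]) (by linarith)
    exact ⟨by positivity, mul_le_of_le_one_left hd h2⟩
  have hlip : LipschitzOnWith 1 g (Set.Icc 0 (dist p q)) := by
    apply LipschitzOnWith.of_dist_le_mul
    intro s hs t ht
    rw [hg s hs t ht, Real.dist_eq]
    simp
  refine ⟨g ∘ (fun t => (t - a) / (b - a) * dist p q), ?_, ?_, ?_, ?_, ?_⟩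
  · exact hlip.continuousOn.comp (by fun_prop) hmaps
  · simp [g0]
  · rcases hab.eq_or_lt with h | h
    · have := hpq h
      subst h
      simp [g0, this]
    · have : b - a ≠ 0 := by linarith
      simp [div_self this, g1]
  · intro t ht
    have h := hmaps ht
    have := hg _ h 0 ⟨le_rfl, hd⟩
    rw [g0] at this
    simp only [Function.comp]
    rw [this, sub_zero, abs_of_nonneg h.1]
    exact h.2
  · have hmono : MonotoneOn (fun t => (t - a) / (b - a) * dist p q) (Set.Icc a b) := by
      intro s _ t _ hst
      have : 0 ≤ b - a := by linarith
      dsimp only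
      gcongr
    refine (eVariationOn.comp_le_of_monotoneOn g _ hmono hmaps).trans ?_
    have h1 := hlip.comp_eVariationOn_le (g := fun t : ℝ => t) (s := Set.Icc 0 (dist p q))
      (fun t ht => ht)
    have h2 : eVariationOn (fun t : ℝ => t) (Set.Icc 0 (dist p q)) ≤
        ENNReal.ofReal (dist p q - 0) := by
      have := MonotoneOn.eVariationOn_le (f := fun t : ℝ => t) (s := Set.Icc 0 (dist p q))
        (fun s _ t _ h => h) (a := 0) (b := dist p q) ⟨le_rfl, hd⟩ ⟨hd, le_rfl⟩
      simpa using this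
    calc _ ≤ _ := h1
      _ ≤ _ := by simpa using h2

theorem push_aux {X Y : Type*} [MetricSpace X] [MetricSpace Y]
    (hY : IsGeodesicSpace Y)
    (k : ℝ) (hk : 1 ≤ k) (φ : X → Y)
    (hφ : ∀ a b : X, dist (φ a) (φ b) ≤ k * dist a b + k)
    (γ : ℝ → X) (hcont : ContinuousOn γ (Set.Icc 0 1)) (m : ℕ) :
    ∀ a ∈ Set.Icc (0 : ℝ) 1, eVariationOn γ (Set.Icc a 1) < m →
    ∃ γ' : ℝ → Y, ContinuousOn γ' (Set.Icc a 1) ∧ γ' a = φ (γ a) ∧ γ' 1 = φ (γ 1) ∧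
      (∀ t ∈ Set.Icc a 1, ∃ s ∈ Set.Icc a 1, dist (γ' t) (φ (γ s)) ≤ 2 * k ∧
        dist (φ (γ t)) (φ (γ s)) ≤ 2 * k) ∧
      eVariationOn γ' (Set.Icc a 1) ≤
        ENNReal.ofReal (2 * k) * eVariationOn γ (Set.Icc a 1) + ENNReal.ofReal (2 * k) := by
  induction m with
  | zero => intro a _ h; simp at h
  | succ m ih =>
    intro a ha hlt
    have hφ1 : ∀ p q : X, dist p q ≤ 1 → dist (φ p) (φ q) ≤ 2 * k := by
      intro p q h
      have := hφ p q
      nlinarith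
    have hca : ContinuousOn γ (Set.Icc a 1) := hcont.mono (Set.Icc_subset_Icc_left ha.1)
    have hcd : ContinuousOn (fun t => dist (γ a) (γ t)) (Set.Icc a 1) :=
      by fun_prop
    by_cases hex : ∃ t ∈ Set.Icc a 1, 1 ≤ dist (γ a) (γ t)
    · obtain ⟨b, ⟨hb, hb1⟩, hleast⟩ : ∃ b, IsLeast
          (Set.Icc a 1 ∩ (fun t => dist (γ a) (γ t)) ⁻¹' Set.Ici 1) b := by
        apply IsCompact.exists_isLeast
        · exact isCompact_Icc.of_isClosed_subset
            (hcd.preimage_isClosed_of_isClosed isClosed_Icc isClosed_Ici) Set.inter_subset_left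
        · obtain ⟨t, ht, h⟩ := hex
          exact ⟨t, ht, h⟩
      simp only [Set.mem_preimage, Set.mem_Ici] at hb1
      have hab : a ≤ b := hb.1
      have hbe : dist (γ a) (γ b) ≤ 1 := by
        obtain ⟨c, hc, hc1⟩ := intermediate_value_Icc hab
          (hcd.mono (Set.Icc_subset_Icc_right hb.2))
          (show (1 : ℝ) ∈ Set.Icc _ _ from ⟨by simp, hb1⟩)
        have : b ≤ c := hleast ⟨⟨hc.1, hc.2.trans hb.2⟩, hc1.ge⟩
        have : c = b := le_antisymm hc.2 this
        subst this
        exact hc1.le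
      have hle : ∀ t ∈ Set.Icc a b, dist (γ t) (γ a) ≤ 1 := by
        intro t ht
        rw [dist_comm]
        rcases ht.2.eq_or_lt with h | h
        · rw [h]; exact hbe
        · by_contra hcon
          push Not at hcon
          exact absurd (hleast ⟨⟨ht.1, ht.2.trans hb.2⟩, hcon.le⟩) (not_le.2 h)
      have hadd : ∀ {Z : Type _} [MetricSpace Z] (f : ℝ → Z),
          eVariationOn f (Set.Icc a b) + eVariationOn f (Set.Icc b 1) =
          eVariationOn f (Set.Icc a 1) := by
        intro Z _ f
        have := eVariationOn.Icc_add_Icc f (s := Set.univ) hab hb.2 (Set.mem_univ _)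
        simpa using this
      have hadd' : ∀ (f : ℝ → Y),
          eVariationOn f (Set.Icc a b) + eVariationOn f (Set.Icc b 1) =
          eVariationOn f (Set.Icc a 1) := by
        intro f
        have := eVariationOn.Icc_add_Icc f (s := Set.univ) hab hb.2 (Set.mem_univ _)
        simpa using this
      have hone : 1 ≤ eVariationOn γ (Set.Icc a b) := by
        refine le_trans ?_ (eVariationOn.edist_le γ (Set.left_mem_Icc.2 hab)
          (Set.right_mem_Icc.2 hab))
        rw [edist_dist]
        simpa using hb1
      have hlt' : eVariationOn γ (Set.Icc b 1) < m := by
        by_contra hcon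
        push Not at hcon
        have := add_le_add hone hcon
        rw [hadd γ] at this
        refine absurd hlt (not_lt.2 ?_)
        push_cast
        rw [add_comm]
        exact this
      obtain ⟨τ, τc, τb, τ1, τd, τv⟩ := ih b ⟨ha.1.trans hab, hb.2⟩ hlt'
      obtain ⟨σ, σc, σa, σb, σd, σv⟩ := seg_aux hY a b hab (φ (γ a)) (φ (γ b))
        (fun h => by rw [h])
      have hE1 : Set.EqOn (fun t => if t ≤ b then σ t else τ t) σ (Set.Icc a b) := by
        intro t ht
        simp [ht.2]
      have hE2 : Set.EqOn (fun t => if t ≤ b then σ t else τ t) τ (Set.Icc b 1) := by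
        intro t ht
        rcases ht.1.eq_or_lt with h | h
        · subst h
          simp [σb, τb]
        · simp [not_le.2 h]
      refine ⟨fun t => if t ≤ b then σ t else τ t, ?_, ?_, ?_, ?_, ?_⟩
      · rw [← Set.Icc_union_Icc_eq_Icc hab hb.2]
        exact (σc.congr hE1).union_of_isClosed (τc.congr hE2) isClosed_Icc isClosed_Icc
      · simp [hab, σa]
      · exact (hE2 ⟨hb.2, le_rfl⟩).trans τ1
      · intro t ht
        rcases le_total t b with h | h
        · refine ⟨a, ⟨le_rfl, ha.2⟩, ?_, hφ1 _ _ (hle t ⟨ht.1, h⟩)⟩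
          rw [hE1 ⟨ht.1, h⟩]
          exact (σd t ⟨ht.1, h⟩).trans (hφ1 _ _ hbe)
        · obtain ⟨s, hs, h3, h4⟩ := τd t ⟨h, ht.2⟩
          refine ⟨s, ⟨hab.trans hs.1, hs.2⟩, ?_, h4⟩
          rw [hE2 ⟨h, ht.2⟩]
          exact h3
      · rw [← hadd', ← hadd γ, eVariationOn.congr hE1, eVariationOn.congr hE2, mul_add, add_assoc]
        refine add_le_add ?_ τv
        calc _ ≤ _ := σv
          _ ≤ ENNReal.ofReal (2 * k) * 1 := by
            rw [mul_one]
            exact ENNReal.ofReal_le_ofReal (hφ1 _ _ hbe)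
          _ ≤ _ := by gcongr
    · push Not at hex
      obtain ⟨σ, σc, σa, σb, σd, σv⟩ := seg_aux hY a 1 ha.2 (φ (γ a)) (φ (γ 1))
        (fun h => by rw [h])
      have h1 := hφ1 _ _ (hex 1 ⟨ha.2, le_rfl⟩).le
      refine ⟨σ, σc, σa, σb, ?_, ?_⟩
      · intro t ht
        refine ⟨a, ⟨le_rfl, ha.2⟩, (σd t ht).trans h1, ?_⟩
        rw [dist_comm]
        exact hφ1 _ _ (hex t ht).le
      · exact (σv.trans (ENNReal.ofReal_le_ofReal h1)).trans le_add_self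

/-- Pushing forward a path avoiding a large ball through a `k`-quasiisometric
embedding `φ : X → Y` of geodesic spaces: a finite-length continuous path `γ`
from `x₁` to `x₂` staying at distance at least `n` from `x` yields a
continuous path `γ'` in `Y` from `φ x₁` to `φ x₂` which stays at distance
greater than `(n−1)/k − 3k` from `φ x`, is at Hausdorff distance at most `4k`
from `φ(γ)`, and has length at most `2k·length(γ) + 2k`. -/
theorem stmt16 {X Y : Type*} [MetricSpace X] [MetricSpace Y]
    (hX : IsGeodesicSpace X) (hY : IsGeodesicSpace Y)
    (k : ℝ) (hk : 1 ≤ k) (φ : X → Y)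
    (hφ : ∀ a b : X, (1 / k) * dist a b - k ≤ dist (φ a) (φ b) ∧
        dist (φ a) (φ b) ≤ k * dist a b + k)
    (x x₁ x₂ : X) (n : ℕ) (hn : 1 ≤ n)
    (γ : ℝ → X) (hcont : ContinuousOn γ (Set.Icc 0 1))
    (h0 : γ 0 = x₁) (h1 : γ 1 = x₂)
    (hfin : eVariationOn γ (Set.Icc 0 1) < ⊤)
    (havoid : ∀ t ∈ Set.Icc (0 : ℝ) 1, (n : ℝ) ≤ dist x (γ t)) :
    ∃ γ' : ℝ → Y, ContinuousOn γ' (Set.Icc 0 1) ∧ γ' 0 = φ x₁ ∧ γ' 1 = φ x₂ ∧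
      (∀ t ∈ Set.Icc (0 : ℝ) 1, ((n : ℝ) - 1) / k - 3 * k < dist (φ x) (γ' t)) ∧
      EMetric.hausdorffEdist (φ '' (γ '' Set.Icc 0 1)) (γ' '' Set.Icc 0 1) ≤
        ENNReal.ofReal (4 * k) ∧
      eVariationOn γ' (Set.Icc 0 1) ≤
        ENNReal.ofReal (2 * k) * eVariationOn γ (Set.Icc 0 1) +
          ENNReal.ofReal (2 * k) := by
  obtain ⟨m, hm⟩ := ENNReal.exists_nat_gt hfin.ne
  obtain ⟨γ', c', e0, e1, hd, hv⟩ := push_aux hY k hk φ (fun a b => (hφ a b).2) γ hcont m 0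
    ⟨le_rfl, zero_le_one⟩ hm
  have hd4 : ∀ t ∈ Set.Icc (0 : ℝ) 1, edist (φ (γ t)) (γ' t) ≤ ENNReal.ofReal (4 * k) := by
    intro t ht
    obtain ⟨s, hs, h3, h4⟩ := hd t ht
    rw [edist_dist]
    apply ENNReal.ofReal_le_ofReal
    have := dist_triangle_right (φ (γ t)) (γ' t) (φ (γ s))
    linarith
  refine ⟨γ', c', by rw [e0, h0], by rw [e1, h1], ?_, ?_, hv⟩
  · intro t ht
    obtain ⟨s, hs, h3, h4⟩ := hd t ht
    have h5 := (hφ x (γ s)).1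
    have h6 := dist_triangle (φ x) (γ' t) (φ (γ s))
    have hkp : 0 < 1 / k := by positivity
    have h7 : 1 / k * n ≤ 1 / k * dist x (γ s) :=
      mul_le_mul_of_nonneg_left (havoid s hs) hkp.le
    have h8 : ((n : ℝ) - 1) / k = 1 / k * n - 1 / k := by ring
    rw [h8]
    linarith
  · apply EMetric.hausdorffEdist_le_of_mem_edist
    · rintro _ ⟨_, ⟨t, ht, rfl⟩, rfl⟩
      exact ⟨γ' t, ⟨t, ht, rfl⟩, hd4 t ht⟩
    · rintro _ ⟨t, ht, rfl⟩
      exact ⟨φ (γ t), ⟨γ t, ⟨t, ht, rfl⟩, rfl⟩, by rw [edist_comm]; exact hd4 t ht⟩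
end
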